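/- Let α ∈ (0,1/2) and let f ∈ Λ^α_T with representative φ_f ∈ L²([0,T]). Then f ∈ L²([0,T]) and ‖f‖_{L²([0,T])} ≤ (T^α / Γ(α+1)) ‖φ_f‖_{L²([0,T])}. In particular Λ^α_T ⊂ L²([0,T]). -/

import Mathlib

open MeasureTheory Real Set

/-- The right-sided fractional integral of order `α` on `[0,T]`. -/
noncomputable def fracInt (T α : ℝ) (f : ℝ → ℝ) (x : ℝ) : ℝ :=
  (1 / Real.Gamma α) * ∫ u in Set.Ioo x T, f u * (u - x) ^ (α - 1)

/-- `f ∈ Λ^α_T` with representative `φ`. -/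
def memLambda (T α : ℝ) (f φ : ℝ → ℝ) : Prop :=
  MemLp φ 2 (volume.restrict (Set.Icc 0 T)) ∧
  ∀ᵐ u ∂(volume.restrict (Set.Icc 0 T)),
    f u = u ^ α * fracInt T α (fun s => s ^ (-α) * φ s) u

/-!
For `0 ≤ u < s` the weights satisfy `u ^ α * s ^ (-α) ≤ 1`, so `|f|` is dominated by the fractional
integral of `|φ|`. On `[0, T]` the latter is a convolution with the kernel `x ^ (α - 1) / Γ(α)` on
`(0, T]`, whose integral is `T ^ α / Γ(α + 1)`, and by Schur's test convolution with a kernel is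
bounded on `L^p` by the integral of the kernel.
-/

open scoped ENNReal

section SchurTest

variable {X Y : Type*} [MeasurableSpace X] [MeasurableSpace Y] {μ : Measure X} {ν : Measure Y}

lemma rpow_lintegral_mul_le {p : ℝ} (hp : 1 ≤ p) {k g : Y → ℝ≥0∞} (hk : AEMeasurable k ν)
    (hg : AEMeasurable g ν) :
    (∫⁻ y, k y * g y ∂ν) ^ p ≤ (∫⁻ y, k y ∂ν) ^ (p - 1) * ∫⁻ y, k y * g y ^ p ∂ν := by
  have hp₀ : 0 < p := zero_lt_one.trans_le hp
  have hq : 0 ≤ 1 - p⁻¹ := sub_nonneg.2 (inv_le_one_of_one_le₀ hp)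
  have split_kernel (y : Y) : k y * g y = k y ^ (1 - p⁻¹) * (k y * g y ^ p) ^ p⁻¹ := by
    rw [ENNReal.mul_rpow_of_nonneg _ _ (inv_nonneg.2 hp₀.le), ENNReal.rpow_rpow_inv hp₀.ne',
      ← mul_assoc, ← ENNReal.rpow_add_of_nonneg _ _ hq (inv_nonneg.2 hp₀.le), sub_add_cancel,
      ENNReal.rpow_one]
  calc (∫⁻ y, k y * g y ∂ν) ^ p
      = (∫⁻ y, k y ^ (1 - p⁻¹) * (k y * g y ^ p) ^ p⁻¹ ∂ν) ^ p := by simp_rw [← split_kernel]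
    _ ≤ ((∫⁻ y, k y ∂ν) ^ (1 - p⁻¹) * (∫⁻ y, k y * g y ^ p ∂ν) ^ p⁻¹) ^ p := by
        gcongr
        exact ENNReal.lintegral_mul_norm_pow_le hk (hk.mul (hg.pow_const p)) hq
          (inv_nonneg.2 hp₀.le) (sub_add_cancel _ _)
    _ = (∫⁻ y, k y ∂ν) ^ (p - 1) * ∫⁻ y, k y * g y ^ p ∂ν := by
        rw [ENNReal.mul_rpow_of_nonneg _ _ hp₀.le, ENNReal.rpow_inv_rpow hp₀.ne',
          ← ENNReal.rpow_mul, sub_mul, one_mul, inv_mul_cancel₀ hp₀.ne']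

lemma eLpNorm_top_lintegral_mul_le {k : X → Y → ℝ≥0∞} {g : Y → ℝ≥0∞} {A : ℝ≥0∞}
    (hk : ∀ x, AEMeasurable (k x) ν) (hA : ∀ᵐ x ∂μ, ∫⁻ y, k x y ∂ν ≤ A) :
    eLpNorm (fun x => ∫⁻ y, k x y * g y ∂ν) ∞ μ ≤ A * eLpNorm g ∞ ν := by
  rw [eLpNorm_exponent_top, eLpNorm_exponent_top]
  refine eLpNormEssSup_le_of_ae_enorm_bound (hA.mono fun x hx => ?_)
  calc ∫⁻ y, k x y * g y ∂ν ≤ ∫⁻ y, k x y * eLpNormEssSup g ν ∂ν :=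
        lintegral_mono_ae ((enorm_ae_le_eLpNormEssSup g ν).mono fun y hy => mul_le_mul_right hy _)
    _ = (∫⁻ y, k x y ∂ν) * eLpNormEssSup g ν := lintegral_mul_const'' _ (hk x)
    _ ≤ A * eLpNormEssSup g ν := by gcongr

variable [SFinite μ] [SFinite ν] {k : X → Y → ℝ≥0∞} {g : Y → ℝ≥0∞} {A B : ℝ≥0∞}

lemma lintegral_rpow_lintegral_mul_le {p : ℝ} (hp : 1 ≤ p)
    (hk : Measurable (Function.uncurry k)) (hg : AEMeasurable g ν)
    (hA : ∀ᵐ x ∂μ, ∫⁻ y, k x y ∂ν ≤ A) (hB : ∀ᵐ y ∂ν, ∫⁻ x, k x y ∂μ ≤ B) :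
    ∫⁻ x, (∫⁻ y, k x y * g y ∂ν) ^ p ∂μ ≤ A ^ (p - 1) * B * ∫⁻ y, g y ^ p ∂ν := by
  have hkg : AEMeasurable (Function.uncurry fun x y => k x y * g y ^ p) (μ.prod ν) :=
    hk.aemeasurable.mul (hg.comp_snd.pow_const p)
  calc ∫⁻ x, (∫⁻ y, k x y * g y ∂ν) ^ p ∂μ
      ≤ ∫⁻ x, A ^ (p - 1) * ∫⁻ y, k x y * g y ^ p ∂ν ∂μ := by
        refine lintegral_mono_ae (hA.mono fun x hx => ?_)
        refine (rpow_lintegral_mul_le hp hk.of_uncurry_left.aemeasurable hg).trans ?_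
        gcongr
    _ = A ^ (p - 1) * ∫⁻ y, ∫⁻ x, k x y * g y ^ p ∂μ ∂ν := by
        rw [lintegral_const_mul'' _ hkg.lintegral_prod_right, lintegral_lintegral_swap hkg]
    _ ≤ A ^ (p - 1) * ∫⁻ y, B * g y ^ p ∂ν := by
        refine mul_le_mul_right (lintegral_mono_ae (hB.mono fun y hy => ?_)) _
        rw [lintegral_mul_const _ hk.of_uncurry_right]
        gcongr
    _ = A ^ (p - 1) * B * ∫⁻ y, g y ^ p ∂ν := by
        rw [lintegral_const_mul'' _ (hg.pow_const p), mul_assoc]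

/-- At `p = ∞` the conventions `∞.toReal = 0` and `0⁻¹ = 0` make the constant equal to `A`. -/
theorem eLpNorm_lintegral_mul_le {p : ℝ≥0∞} (hp : 1 ≤ p)
    (hk : Measurable (Function.uncurry k)) (hg : AEMeasurable g ν)
    (hA : ∀ᵐ x ∂μ, ∫⁻ y, k x y ∂ν ≤ A) (hB : ∀ᵐ y ∂ν, ∫⁻ x, k x y ∂μ ≤ B) :
    eLpNorm (fun x => ∫⁻ y, k x y * g y ∂ν) p μ ≤
      A ^ (1 - p.toReal⁻¹) * B ^ p.toReal⁻¹ * eLpNorm g p ν := by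
  rcases eq_or_ne p ∞ with rfl | hp_top
  · simpa using eLpNorm_top_lintegral_mul_le (fun _ => hk.of_uncurry_left.aemeasurable) hA
  have hp₁ : 1 ≤ p.toReal := by simpa using ENNReal.toReal_mono hp_top hp
  have hp₀ : 0 < p.toReal := zero_lt_one.trans_le hp₁
  have hinv : 0 ≤ p.toReal⁻¹ := inv_nonneg.2 hp₀.le
  simp only [eLpNorm_eq_lintegral_rpow_enorm_toReal (zero_lt_one.trans_le hp).ne' hp_top,
    enorm_eq_self, one_div]
  calc (∫⁻ x, (∫⁻ y, k x y * g y ∂ν) ^ p.toReal ∂μ) ^ p.toReal⁻¹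
      ≤ (A ^ (p.toReal - 1) * B * ∫⁻ y, g y ^ p.toReal ∂ν) ^ p.toReal⁻¹ := by
        gcongr
        exact lintegral_rpow_lintegral_mul_le hp₁ hk hg hA hB
    _ = A ^ (1 - p.toReal⁻¹) * B ^ p.toReal⁻¹ * (∫⁻ y, g y ^ p.toReal ∂ν) ^ p.toReal⁻¹ := by
        rw [ENNReal.mul_rpow_of_nonneg _ _ hinv, ENNReal.mul_rpow_of_nonneg _ _ hinv,
          ← ENNReal.rpow_mul, sub_mul, one_mul, mul_inv_cancel₀ hp₀.ne']

end SchurTest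

theorem eLpNorm_setLIntegral_sub_mul_le {G : Type*} [AddGroup G] [MeasurableSpace G]
    [MeasurableAdd₂ G] [MeasurableNeg G] {μ : Measure G} [SFinite μ] [μ.IsAddLeftInvariant]
    [μ.IsAddRightInvariant] [μ.IsNegInvariant] {p : ℝ≥0∞} (hp : 1 ≤ p) {S : Set G}
    {K g : G → ℝ≥0∞} (hK : Measurable K) (hg : AEMeasurable g (μ.restrict S)) :
    eLpNorm (fun x => ∫⁻ y in S, K (y - x) * g y ∂μ) p (μ.restrict S) ≤
      (∫⁻ z, K z ∂μ) * eLpNorm g p (μ.restrict S) := by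
  have hp_inv : p.toReal⁻¹ ≤ 1 := by
    rw [← ENNReal.toReal_inv]
    simpa using ENNReal.toReal_mono ENNReal.one_ne_top (ENNReal.inv_le_one.2 hp)
  have mass_right (x : G) : ∫⁻ y in S, K (y - x) ∂μ ≤ ∫⁻ z, K z ∂μ :=
    (setLIntegral_le_lintegral _ _).trans_eq (lintegral_sub_right_eq_self K x)
  have mass_left (y : G) : ∫⁻ x in S, K (y - x) ∂μ ≤ ∫⁻ z, K z ∂μ :=
    (setLIntegral_le_lintegral _ _).trans_eq (lintegral_sub_left_eq_self K y)
  have hk : Measurable (Function.uncurry fun x y => K (y - x)) :=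
    hK.comp (measurable_snd.sub measurable_fst)
  refine (eLpNorm_lintegral_mul_le hp hk hg (.of_forall mass_right)
    (.of_forall mass_left)).trans_eq ?_
  rw [← ENNReal.rpow_add_of_nonneg _ _ (sub_nonneg.2 hp_inv) (by positivity), sub_add_cancel,
    ENNReal.rpow_one]

section FractionalIntegral

variable {T α : ℝ}

/-- The kernel `x ^ (α - 1) / Γ(α)` of the fractional integral of order `α`, as a function of the
difference `x = s - u` of the two variables. It is cut off to `(0, T]`, which contains all the
positive differences of points of `[0, T]`, to make it integrable, and it is `ℝ≥0∞`-valued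
so that convolutions with it make sense without integrability assumptions. -/
noncomputable def fracKernel (T α : ℝ) : ℝ → ℝ≥0∞ :=
  (Ioc 0 T).indicator fun x => ENNReal.ofReal (x ^ (α - 1) / Gamma α)

lemma measurable_fracKernel : Measurable (fracKernel T α) :=
  Measurable.indicator (by fun_prop) measurableSet_Ioc

lemma lintegral_fracKernel (hT : 0 ≤ T) (hα : 0 < α) :
    ∫⁻ x, fracKernel T α x = ENNReal.ofReal (T ^ α / Gamma (α + 1)) := by
  have hint : IntegrableOn (fun x : ℝ => x ^ (α - 1) / Gamma α) (Ioc 0 T) :=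
    (intervalIntegrable_iff_integrableOn_Ioc_of_le hT).1
      ((intervalIntegral.intervalIntegrable_rpow' (by linarith)).div_const _)
  have hnonneg : ∀ᵐ x ∂volume.restrict (Ioc 0 T), 0 ≤ x ^ (α - 1) / Gamma α := by
    filter_upwards [ae_restrict_mem measurableSet_Ioc] with x hx
    exact div_nonneg (rpow_nonneg hx.1.le _) (Gamma_nonneg_of_nonneg hα.le)
  have hvalue : ∫ x in Ioc 0 T, x ^ (α - 1) / Gamma α = T ^ α / Gamma (α + 1) := by
    rw [integral_div, ← intervalIntegral.integral_of_le hT,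
      integral_rpow (Or.inl (by linarith)), sub_add_cancel, zero_rpow hα.ne', sub_zero, div_div,
      Gamma_add_one hα.ne']
  rw [← hvalue, ofReal_integral_eq_lintegral_ofReal hint hnonneg]
  exact lintegral_indicator measurableSet_Ioc _

lemma const_mul_fracInt (c : ℝ) (f : ℝ → ℝ) (u : ℝ) :
    c * fracInt T α f u = fracInt T α (fun s => c * f s) u := by
  simp only [fracInt, mul_assoc, integral_const_mul]
  ring

lemma enorm_fracInt_le (hα : 0 ≤ α) {u : ℝ} (hu : 0 ≤ u) (f : ℝ → ℝ) :
    ‖fracInt T α f u‖ₑ ≤ ∫⁻ s in Ioo u T, fracKernel T α (s - u) * ‖f s‖ₑ := by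
  rw [fracInt, ← integral_const_mul]
  refine (enorm_integral_le_lintegral_enorm _).trans_eq ?_
  refine setLIntegral_congr_fun measurableSet_Ioo fun s ⟨hus, hsT⟩ => ?_
  have hmem : s - u ∈ Ioc 0 T := ⟨sub_pos.2 hus, by linarith⟩
  have hnonneg : 0 ≤ (s - u) ^ (α - 1) / Gamma α :=
    div_nonneg (rpow_nonneg hmem.1.le _) (Gamma_nonneg_of_nonneg hα)
  simp only [fracKernel, indicator_of_mem hmem]
  rw [← enorm_of_nonneg hnonneg, ← enorm_mul]
  congr 1
  ring

lemma rpow_mul_rpow_neg_le_one (hα : 0 ≤ α) {u s : ℝ} (hu : 0 ≤ u) (hus : u ≤ s) :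
    u ^ α * s ^ (-α) ≤ 1 := by
  rw [rpow_neg (hu.trans hus), ← div_eq_mul_inv]
  exact div_le_one_of_le₀ (rpow_le_rpow hu hus hα) (rpow_nonneg (hu.trans hus) _)

lemma enorm_rpow_mul_fracInt_le (hα : 0 ≤ α) {u : ℝ} (hu : 0 ≤ u) (φ : ℝ → ℝ) :
    ‖u ^ α * fracInt T α (fun s => s ^ (-α) * φ s) u‖ₑ ≤
      ∫⁻ s in Icc 0 T, fracKernel T α (s - u) * ‖φ s‖ₑ := by
  have weight_le {s : ℝ} (hus : u ≤ s) : ‖u ^ α * (s ^ (-α) * φ s)‖ₑ ≤ ‖φ s‖ₑ := by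
    rw [← mul_assoc, enorm_mul, enorm_of_nonneg
      (mul_nonneg (rpow_nonneg hu _) (rpow_nonneg (hu.trans hus) _))]
    exact mul_le_of_le_one_left' (ENNReal.ofReal_le_one.2 (rpow_mul_rpow_neg_le_one hα hu hus))
  rw [const_mul_fracInt]
  calc ‖fracInt T α (fun s => u ^ α * (s ^ (-α) * φ s)) u‖ₑ
      ≤ ∫⁻ s in Ioo u T, fracKernel T α (s - u) * ‖u ^ α * (s ^ (-α) * φ s)‖ₑ :=
        enorm_fracInt_le hα hu _
    _ ≤ ∫⁻ s in Ioo u T, fracKernel T α (s - u) * ‖φ s‖ₑ :=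
        setLIntegral_mono' measurableSet_Ioo fun s hs => mul_le_mul_right (weight_le hs.1.le) _
    _ ≤ ∫⁻ s in Icc 0 T, fracKernel T α (s - u) * ‖φ s‖ₑ :=
        lintegral_mono_set fun s hs => ⟨hu.trans hs.1.le, hs.2.le⟩

theorem eLpNorm_rpow_mul_fracInt_le {p : ℝ≥0∞} (hp : 1 ≤ p) (hT : 0 ≤ T) (hα : 0 < α) {φ : ℝ → ℝ}
    (hφ : AEStronglyMeasurable φ (volume.restrict (Icc 0 T))) :
    eLpNorm (fun u => u ^ α * fracInt T α (fun s => s ^ (-α) * φ s) u) p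
        (volume.restrict (Icc 0 T)) ≤
      ENNReal.ofReal (T ^ α / Gamma (α + 1)) * eLpNorm φ p (volume.restrict (Icc 0 T)) := by
  have pointwise_le : ∀ᵐ u ∂volume.restrict (Icc 0 T),
      ‖u ^ α * fracInt T α (fun s => s ^ (-α) * φ s) u‖ₑ ≤
        ‖∫⁻ s in Icc 0 T, fracKernel T α (s - u) * ‖φ s‖ₑ‖ₑ :=
    (ae_restrict_mem measurableSet_Icc).mono fun u hu => enorm_rpow_mul_fracInt_le hα.le hu.1 φ
  refine (eLpNorm_mono_enorm_ae pointwise_le).trans ?_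
  rw [← lintegral_fracKernel hT hα, ← eLpNorm_enorm φ]
  exact eLpNorm_setLIntegral_sub_mul_le hp measurable_fracKernel hφ.enorm

lemma aestronglyMeasurable_fracInt {a : ℝ} {f : ℝ → ℝ}
    (hf : AEStronglyMeasurable f (volume.restrict (Icc a T))) :
    AEStronglyMeasurable (fracInt T α f) (volume.restrict (Icc a T)) := by
  let F : ℝ × ℝ → ℝ := {q : ℝ × ℝ | q.2 ∈ Ioo q.1 T}.indicator
    fun q => f q.2 * (q.2 - q.1) ^ (α - 1)
  have hF : AEStronglyMeasurable F
      ((volume.restrict (Icc a T)).prod (volume.restrict (Icc a T))) := by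
    refine (hf.comp_snd.mul (Measurable.aestronglyMeasurable (by fun_prop))).indicator ?_
    exact (measurableSet_lt measurable_fst measurable_snd).inter
      (measurableSet_lt measurable_snd measurable_const)
  refine (hF.integral_prod_right'.const_mul (1 / Gamma α)).congr ?_
  filter_upwards [ae_restrict_mem measurableSet_Icc] with u hu
  have hsub : Ioo u T ⊆ Icc a T := fun s hs => ⟨hu.1.trans hs.1.le, hs.2.le⟩
  change 1 / Gamma α * ∫ s in Icc a T, (Ioo u T).indicator (fun s => f s * (s - u) ^ (α - 1)) s = _
  rw [setIntegral_indicator measurableSet_Ioo, inter_eq_right.2 hsub, fracInt]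

end FractionalIntegral

theorem memLambda_L2_general {T α : ℝ} (hT : 0 ≤ T) (hα : 0 < α) {f φ : ℝ → ℝ}
    (hf : memLambda T α f φ) :
    MemLp f 2 (volume.restrict (Icc 0 T)) ∧
    eLpNorm f 2 (volume.restrict (Icc 0 T)) ≤
      ENNReal.ofReal (T ^ α / Gamma (α + 1) *
        (eLpNorm φ 2 (volume.restrict (Icc 0 T))).toReal) := by
  obtain ⟨hφ, hfφ⟩ := hf
  have hmeas : AEStronglyMeasurable f (volume.restrict (Icc 0 T)) := by
    have hweight (β : ℝ) : AEStronglyMeasurable (· ^ β : ℝ → ℝ) (volume.restrict (Icc 0 T)) :=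
      (measurable_id.pow_const β).aestronglyMeasurable
    exact ((hweight α).mul (aestronglyMeasurable_fracInt ((hweight (-α)).mul hφ.1))).congr
      (Filter.EventuallyEq.symm hfφ)
  have hbound : eLpNorm f 2 (volume.restrict (Icc 0 T)) ≤ ENNReal.ofReal (T ^ α / Gamma (α + 1) *
      (eLpNorm φ 2 (volume.restrict (Icc 0 T))).toReal) := by
    rw [ENNReal.ofReal_mul' ENNReal.toReal_nonneg, ENNReal.ofReal_toReal hφ.2.ne,
      eLpNorm_congr_ae hfφ]
    exact eLpNorm_rpow_mul_fracInt_le one_le_two hT hα hφ.1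
  exact ⟨⟨hmeas, hbound.trans_lt ENNReal.ofReal_lt_top⟩, hbound⟩

/-- Remark after Proposition 2.6.1: `Λ^α_T ⊂ L²([0,T])`, with
`‖f‖_{L²} ≤ (T^α/Γ(α+1)) ‖φ_f‖_{L²}`. -/
theorem memLambda_L2 (T α : ℝ) (hT : 0 < T) (hα : α ∈ Set.Ioo (0 : ℝ) (1 / 2))
    (f φ : ℝ → ℝ) (hf : memLambda T α f φ) :
    MemLp f 2 (volume.restrict (Set.Icc 0 T)) ∧
    eLpNorm f 2 (volume.restrict (Set.Icc 0 T)) ≤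
      ENNReal.ofReal (T ^ α / Real.Gamma (α + 1) *
        (eLpNorm φ 2 (volume.restrict (Set.Icc 0 T))).toReal) :=
  memLambda_L2_general hT.le hα.1 hf
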